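/- Let Ω = Ω₁ × ⋯ × Ω_d, where each Ω_i ⊆ ℝ is Lebesgue-measurable of finite Lebesgue measure with (0,1] ⊆ Ω_i, equipped with Lebesgue measure, let p⃗ = (p₁,…,p_d) with 0 < p_i ≤ ∞ and 0 < min{p₁,…,p_d} < ∞, and let 0 < q ≤ ∞. Then the additional growth-envelope index of L_{p⃗,q}(Ω) (taken with respect to the envelope t^{-1/min{p₁,…,p_d}}) equals q: the Hardy-type inequality ( ∫_0^ε ( t^{1/min{p₁,…,p_d}} f^*(t) )^v dt/t )^{1/v} ≤ c ‖f‖_{L_{p⃗,q}} (for some ε, c > 0 and all f ∈ L_{p⃗,q}(Ω)) holds for v = q and fails for every 0 < v < q. -/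

import Mathlib

open MeasureTheory ENNReal Set Filter

noncomputable section

/-- One-variable `L_p` quasi-norm of an `ℝ≥0∞`-valued function (essential sup if `p = ∞`). -/
def lpNorm1 {α : Type} [MeasurableSpace α] (p : ℝ≥0∞) (μ : Measure α)
    (g : α → ℝ≥0∞) : ℝ≥0∞ :=
  if p = ∞ then essSup g μ else (∫⁻ x, g x ^ p.toReal ∂μ) ^ (1 / p.toReal)

/-- Mixed Lebesgue quasi-norm of an `ℝ≥0∞`-valued function on a product space:
the first coordinate is integrated innermost. -/
def mixedNormE : {d : ℕ} → {α : Fin d → Type} →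
    [inst : ∀ i, MeasurableSpace (α i)] → (μ : ∀ i, Measure (α i)) →
    (p : Fin d → ℝ≥0∞) → ((∀ i, α i) → ℝ≥0∞) → ℝ≥0∞
  | 0, _, _, _, _, f => f finZeroElim
  | (d + 1), α, inst, μ, p, f =>
      @mixedNormE d (fun i => α i.succ) (fun i => inst i.succ)
        (fun i => μ i.succ) (fun i => p i.succ)
        (fun y => lpNorm1 (p 0) (μ 0) fun x => f (Fin.cons x y))

/-- Mixed Lebesgue quasi-norm `‖f‖_{p⃗}` of a real-valued function. -/
def mixedNorm {d : ℕ} {α : Fin d → Type} [∀ i, MeasurableSpace (α i)]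
    (μ : ∀ i, Measure (α i)) (p : Fin d → ℝ≥0∞) (f : (∀ i, α i) → ℝ) : ℝ≥0∞ :=
  mixedNormE μ p fun x => ENNReal.ofReal |f x|

/-- Mixed Lorentz quasi-norm `‖f‖_{L_{p⃗,q}}`. -/
def mixedLorentzNorm {d : ℕ} {α : Fin d → Type} [∀ i, MeasurableSpace (α i)]
    (μ : ∀ i, Measure (α i)) (p : Fin d → ℝ≥0∞) (q : ℝ≥0∞) (f : (∀ i, α i) → ℝ) : ℝ≥0∞ :=
  if q = ∞ then
    ⨆ (u : ℝ) (_ : 0 < u),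
      ENNReal.ofReal u * mixedNorm μ p ({x | u < |f x|}.indicator fun _ => (1 : ℝ))
  else
    (∫⁻ u in Set.Ioi (0 : ℝ),
        (ENNReal.ofReal u * mixedNorm μ p ({x | u < |f x|}.indicator fun _ => (1 : ℝ))) ^ q.toReal
          / ENNReal.ofReal u) ^ (1 / q.toReal)

/-- Non-increasing rearrangement `f^*(t)` (with `inf ∅ = ∞`). -/
def rearr {α : Type} [MeasurableSpace α] (μ : Measure α) (f : α → ℝ) (t : ℝ) : ℝ≥0∞ :=
  sInf {s : ℝ≥0∞ | μ {x | s < ENNReal.ofReal |f x|} ≤ ENNReal.ofReal t}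

/-- Growth envelope function of the quasi-normed function space given by the quasi-norm `N`. -/
def growthEnv {α : Type} [MeasurableSpace α] (μ : Measure α)
    (N : (α → ℝ) → ℝ≥0∞) (t : ℝ) : ℝ≥0∞ :=
  ⨆ (f : α → ℝ) (_ : Measurable f) (_ : N f ≤ 1), rearr μ f t

/-- The Hardy-type functional `( ∫_0^ε ( t^{pinv} f^*(t) )^v dt/t )^{1/v}`,
with the usual `sup` modification for `v = ∞`. -/
def hardy {α : Type} [MeasurableSpace α] (μ : Measure α)
    (pinv : ℝ) (v : ℝ≥0∞) (ε : ℝ) (f : α → ℝ) : ℝ≥0∞ :=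
  if v = ∞ then ⨆ (t : ℝ) (_ : t ∈ Set.Ioo 0 ε), ENNReal.ofReal t ^ pinv * rearr μ f t
  else
    (∫⁻ t in Set.Ioo (0 : ℝ) ε,
        (ENNReal.ofReal t ^ pinv * rearr μ f t) ^ v.toReal / ENNReal.ofReal t) ^ (1 / v.toReal)

/-- The modular `ϱ_{p(·)}(f) = ∫ |f(x)|^{p(x)} dμ(x)`. -/
def varModular {α : Type} [MeasurableSpace α] (μ : Measure α)
    (p : α → ℝ) (f : α → ℝ) : ℝ≥0∞ :=
  ∫⁻ x, ENNReal.ofReal (|f x| ^ p x) ∂μ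

/-- The variable Lebesgue quasi-norm `‖f‖_{p(·)}`. -/
def varNorm {α : Type} [MeasurableSpace α] (μ : Measure α)
    (p : α → ℝ) (f : α → ℝ) : ℝ≥0∞ :=
  ⨅ (l : ℝ) (_ : 0 < l) (_ : varModular μ p (fun x => f x / l) ≤ 1), ENNReal.ofReal l

/-- The variable Lorentz quasi-norm `‖f‖_{L_{p(·),q}}`. -/
def varLorentzNorm {α : Type} [MeasurableSpace α] (μ : Measure α)
    (p : α → ℝ) (q : ℝ≥0∞) (f : α → ℝ) : ℝ≥0∞ :=
  if q = ∞ then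
    ⨆ (u : ℝ) (_ : 0 < u),
      ENNReal.ofReal u * varNorm μ p ({x | u < |f x|}.indicator fun _ => (1 : ℝ))
  else
    (∫⁻ u in Set.Ioi (0 : ℝ),
        (ENNReal.ofReal u * varNorm μ p ({x | u < |f x|}.indicator fun _ => (1 : ℝ))) ^ q.toReal
          / ENNReal.ofReal u) ^ (1 / q.toReal)

/-- Local log-Hölder continuity at a point `x₀`. -/
def LocLogHolderAt {E : Type} [PseudoMetricSpace E] (p : E → ℝ) (x₀ : E) : Prop :=
  ∃ C₀ > (0 : ℝ), ∀ x, dist x x₀ < 1 / 2 → |p x - p x₀| ≤ C₀ / (-Real.log (dist x x₀))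

/-- Local log-Hölder continuity (at every point, with a uniform constant). -/
def LocLogHolder {E : Type} [PseudoMetricSpace E] (p : E → ℝ) : Prop :=
  ∃ C₀ > (0 : ℝ), ∀ x y, dist x y < 1 / 2 → |p x - p y| ≤ C₀ / (-Real.log (dist x y))

end

/-!
With respect to the measure `dt/t`, Fubini's theorem applied to the region
`{(t, u) | u < f^*(t)} = {(t, u) | t < μ {|f| > u}}` identifies the `L_q` quasi-norm of
`t^{1/P} f^*(t)` with `P^{1/q} ‖f‖_{L_{P,q}}`. Put `m = min p_i`. Hölder's inequality in each
variable gives `μ(A)^{1/m} ≲ ‖χ_A‖_{p⃗}`, hence `L_{p⃗,q} ⊆ L_{m,q}` and the inequality for `v = q`.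

Conversely, for a function of the single coordinate `x_j` with `p_j = m`, the mixed quasi-norm is
comparable to that of `L_{m,q}`. Feeding a uniformly distributed function of `x_j` into
`y ↦ max(y, δ)^{-1/m}`, the Hardy functional with index `v` grows at least like `log(1/δ)^{1/v}`,
while the quasi-norm is at most of order `log(1/δ)^{1/q}`; so no `v < q` is admissible.
-/

noncomputable section

/-! ### Norms with respect to `dt/t` -/

/-- The Haar measure `dt/t` of the multiplicative group `(0, ∞)`, extended by zero to `ℝ`. -/
def mulHaar : Measure ℝ :=
  (volume.restrict (Ioi 0)).withDensity fun t => (ENNReal.ofReal t)⁻¹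

instance : SFinite mulHaar :=
  inferInstanceAs (SFinite ((volume.restrict (Ioi 0)).withDensity _))

instance : NullSingletonClass mulHaar :=
  inferInstanceAs (NullSingletonClass ((volume.restrict (Ioi 0)).withDensity _))

lemma setLIntegral_mulHaar {S : Set ℝ} (hS : MeasurableSet S) (g : ℝ → ℝ≥0∞) :
    ∫⁻ t in S, g t ∂mulHaar = ∫⁻ t in S ∩ Ioi 0, g t / ENNReal.ofReal t := by
  have hfinite : ∀ᵐ t ∂(volume.restrict (Ioi (0 : ℝ))).restrict S,
      (ENNReal.ofReal t)⁻¹ < ∞ := by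
    refine ae_restrict_of_ae ?_
    filter_upwards [ae_restrict_mem measurableSet_Ioi] with t ht
    simpa using ht
  rw [mulHaar, setLIntegral_withDensity_eq_setLIntegral_mul_non_measurable _ (by fun_prop) _ hS
    hfinite, Measure.restrict_restrict hS]
  simp only [Pi.mul_apply, div_eq_mul_inv, mul_comm]

lemma setLIntegral_mulHaar_of_subset_Ioi {S : Set ℝ} (hS : MeasurableSet S) (hS₀ : S ⊆ Ioi 0)
    (g : ℝ → ℝ≥0∞) : ∫⁻ t in S, g t ∂mulHaar = ∫⁻ t in S, g t / ENNReal.ofReal t := by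
  rw [setLIntegral_mulHaar hS, inter_eq_left.2 hS₀]

lemma setLIntegral_Ioi_mulHaar (g : ℝ → ℝ≥0∞) :
    ∫⁻ t in Ioi 0, g t ∂mulHaar = ∫⁻ t, g t ∂mulHaar := by
  rw [← setLIntegral_univ (μ := mulHaar), setLIntegral_mulHaar measurableSet_Ioi,
    setLIntegral_mulHaar MeasurableSet.univ, inter_self, univ_inter]

lemma mulHaar_Ioo {a b : ℝ} (ha : 0 < a) (hab : a ≤ b) :
    mulHaar (Ioo a b) = ENNReal.ofReal (Real.log (b / a)) := by
  have hpos : ∀ t ∈ Ioc a b, 0 < t := fun t ht => ha.trans ht.1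
  have hint : IntegrableOn (fun t : ℝ => 1 / t) (Ioc a b) :=
    (intervalIntegrable_iff_integrableOn_Ioc_of_le hab).1 <|
      intervalIntegral.intervalIntegrable_one_div
        (fun t ht => (ha.trans_le (uIcc_of_le hab ▸ ht).1).ne') continuousOn_id
  rw [← setLIntegral_one, setLIntegral_mulHaar_of_subset_Ioi measurableSet_Ioo
    (fun t ht => ha.trans ht.1), setLIntegral_congr Ioo_ae_eq_Ioc,
    ← integral_one_div_of_pos ha (ha.trans_le hab), intervalIntegral.integral_of_le hab,
    ofReal_integral_eq_lintegral_ofReal hint]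
  · refine setLIntegral_congr_fun measurableSet_Ioc fun t ht => ?_
    rw [ENNReal.ofReal_div_of_pos (hpos t ht), ENNReal.ofReal_one]
  · filter_upwards [ae_restrict_mem measurableSet_Ioc] with t ht
    exact one_div_nonneg.2 (hpos t ht).le

lemma ofReal_rpow_div_ofReal {r t : ℝ} (ht : 0 < t) :
    ENNReal.ofReal t ^ r / ENNReal.ofReal t = ENNReal.ofReal (t ^ (r - 1)) := by
  rw [Real.rpow_sub_one ht.ne', ENNReal.ofReal_div_of_pos ht, ENNReal.ofReal_rpow_of_pos ht]

lemma setLIntegral_Ioo_rpow_mulHaar {r b : ℝ} (hr : 0 < r) (hb : 0 ≤ b) :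
    ∫⁻ t in Ioo 0 b, ENNReal.ofReal t ^ r ∂mulHaar =
      ENNReal.ofReal b ^ r / ENNReal.ofReal r := by
  have hint : IntegrableOn (fun t : ℝ => t ^ (r - 1)) (Ioc 0 b) :=
    (intervalIntegrable_iff_integrableOn_Ioc_of_le hb).1 <|
      intervalIntegral.intervalIntegrable_rpow' (by linarith)
  have hvalue : ∫ t in Ioc 0 b, t ^ (r - 1) = b ^ r / r := by
    rw [← intervalIntegral.integral_of_le hb, integral_rpow (Or.inl (by linarith)),
      sub_add_cancel, Real.zero_rpow hr.ne', sub_zero]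
  rw [setLIntegral_mulHaar_of_subset_Ioi measurableSet_Ioo (fun t ht => ht.1),
    setLIntegral_congr_fun measurableSet_Ioo fun t ht => ofReal_rpow_div_ofReal ht.1,
    setLIntegral_congr Ioo_ae_eq_Ioc, ← ofReal_integral_eq_lintegral_ofReal hint, hvalue,
    ENNReal.ofReal_div_of_pos hr, ENNReal.ofReal_rpow_of_nonneg hb hr.le]
  filter_upwards [ae_restrict_mem measurableSet_Ioc] with t ht
  exact Real.rpow_nonneg ht.1.le _

lemma setLIntegral_Ioo_div_rpow_mulHaar {r a : ℝ} (hr : 0 < r) (ha : 0 < a) :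
    ∫⁻ u in Ioo 0 a, ENNReal.ofReal (u / a) ^ r ∂mulHaar = ENNReal.ofReal (1 / r) := by
  have ha_rpow : ENNReal.ofReal a ^ r ≠ ∞ := by finiteness
  simp only [ENNReal.ofReal_div_of_pos ha, ENNReal.div_rpow_of_nonneg _ _ hr.le,
    div_eq_mul_inv (_ ^ r)]
  rw [lintegral_mul_const _ (by fun_prop), setLIntegral_Ioo_rpow_mulHaar hr ha.le,
    mul_comm, ← mul_div_assoc, ENNReal.inv_mul_cancel (by positivity) ha_rpow,
    ENNReal.ofReal_div_of_pos hr, ENNReal.ofReal_one]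

lemma lintegral_rpow_mulHaar {r : ℝ} : ∫⁻ t, ENNReal.ofReal t ^ r ∂mulHaar = ∞ := by
  have hne : ¬ ∫⁻ t in Ioi (0 : ℝ), ENNReal.ofReal (t ^ (r - 1)) ≠ ∞ := by
    rw [lintegral_ofReal_ne_top_iff_integrable (by fun_prop)]
    · exact not_integrableOn_Ioi_rpow (r - 1)
    · filter_upwards [ae_restrict_mem measurableSet_Ioi] with t ht
      exact Real.rpow_nonneg (le_of_lt ht) _
  rw [← setLIntegral_Ioi_mulHaar, setLIntegral_mulHaar_of_subset_Ioi measurableSet_Ioi subset_rfl,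
    setLIntegral_congr_fun measurableSet_Ioi fun t ht => ofReal_rpow_div_ofReal ht]
  exact not_not.1 hne

lemma setLIntegral_rpow_mulHaar_of_lt {r : ℝ} (hr : 0 < r) (a : ℝ≥0∞) :
    ∫⁻ t in {t | ENNReal.ofReal t < a}, ENNReal.ofReal t ^ r ∂mulHaar =
      a ^ r / ENNReal.ofReal r := by
  rcases eq_or_ne a ∞ with rfl | ha
  · simp only [ENNReal.ofReal_lt_top, ofPred_true, setLIntegral_univ, lintegral_rpow_mulHaar,
      ENNReal.top_rpow_of_pos hr, ENNReal.top_div_of_ne_top ENNReal.ofReal_ne_top]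
  · lift a to NNReal using ha
    have hset : {t | ENNReal.ofReal t < a} ∩ Ioi 0 = Ioo 0 (a : ℝ) := by
      ext t
      simp only [mem_inter_iff, mem_ofPred_eq, mem_Ioi, mem_Ioo, and_comm (b := 0 < t)]
      exact and_congr_right fun ht => by
        rw [← ENNReal.ofReal_coe_nnreal, ENNReal.ofReal_lt_ofReal_iff_of_nonneg ht.le]
    rw [setLIntegral_mulHaar (measurableSet_lt ENNReal.measurable_ofReal measurable_const), hset,
      ← setLIntegral_mulHaar_of_subset_Ioi measurableSet_Ioo (fun t ht => ht.1),
      setLIntegral_Ioo_rpow_mulHaar hr a.coe_nonneg, ENNReal.ofReal_coe_nnreal]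

lemma iSup_rpow_of_lt {r : ℝ} (hr : 0 < r) (a : ℝ≥0∞) :
    ⨆ t ∈ Ioi (0 : ℝ), ⨆ _ : ENNReal.ofReal t < a, ENNReal.ofReal t ^ r = a ^ r := by
  refine le_antisymm (iSup₂_le fun t _ => iSup_le fun ht => ENNReal.rpow_le_rpow ht.le hr.le) ?_
  refine le_of_forall_lt fun b hb => ?_
  obtain ⟨t, -, hbt, hta⟩ :=
    ENNReal.lt_iff_exists_real_btwn.1 ((ENNReal.rpow_inv_lt_iff hr).2 hb)
  have hpos : 0 < t := ENNReal.ofReal_pos.1 (zero_le.trans_lt hbt)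
  exact ((ENNReal.rpow_inv_lt_iff hr).1 hbt).trans_le
    (le_iSup₂_of_le t hpos (le_iSup_of_le hta le_rfl))

/-- The `L_q` quasi-norm of `g` over `S ⊆ (0, ∞)` with respect to `dt/t`. For `q = ∞` it is a
genuine supremum, in accordance with `hardy` and `mixedLorentzNorm`. -/
def haarNorm (q : ℝ≥0∞) (S : Set ℝ) (g : ℝ → ℝ≥0∞) : ℝ≥0∞ :=
  if q = ∞ then ⨆ t ∈ S, g t else (∫⁻ t in S, g t ^ q.toReal ∂mulHaar) ^ (1 / q.toReal)

section haarNorm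

variable {q : ℝ≥0∞} {S T : Set ℝ} {g h : ℝ → ℝ≥0∞}

lemma haarNorm_mono (hS : MeasurableSet S) (hgh : ∀ t ∈ S, g t ≤ h t) :
    haarNorm q S g ≤ haarNorm q S h := by
  unfold haarNorm
  split_ifs
  · exact iSup₂_mono hgh
  · gcongr 1
    exact setLIntegral_mono' hS fun t ht => ENNReal.rpow_le_rpow (hgh t ht) ENNReal.toReal_nonneg

lemma haarNorm_mono_set (hST : S ⊆ T) : haarNorm q S g ≤ haarNorm q T g := by
  unfold haarNorm
  split_ifs
  · exact biSup_mono hST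
  · gcongr 1
    exact lintegral_mono_set hST

lemma haarNorm_const_mul (hq : 0 < q) {c : ℝ≥0∞} (hc : c ≠ ∞) :
    haarNorm q S (fun t => c * g t) = c * haarNorm q S g := by
  unfold haarNorm
  split_ifs with hq_top
  · simp only [ENNReal.mul_iSup]
  · have hQ : 0 < q.toReal := ENNReal.toReal_pos hq.ne' hq_top
    simp only [ENNReal.mul_rpow_of_nonneg _ _ hQ.le]
    rw [lintegral_const_mul' _ _ (ENNReal.rpow_ne_top_of_nonneg hQ.le hc),
      ENNReal.mul_rpow_of_nonneg _ _ (by positivity), ← ENNReal.rpow_mul,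
      mul_one_div_cancel hQ.ne', ENNReal.rpow_one]

lemma haarNorm_le_const_mul (hq : 0 < q) (hS : MeasurableSet S) {c : ℝ≥0∞} (hc : c ≠ ∞)
    (hgh : ∀ t ∈ S, g t ≤ c * h t) : haarNorm q S g ≤ c * haarNorm q S h :=
  (haarNorm_mono hS hgh).trans_eq (haarNorm_const_mul hq hc)

lemma haarNorm_one_Ioo (hq : q ≠ ∞) {a b : ℝ} (ha : 0 < a) (hab : a ≤ b) :
    haarNorm q (Ioo a b) (fun _ => 1) =
      ENNReal.ofReal (Real.log (b / a)) ^ (1 / q.toReal) := by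
  simp only [haarNorm, if_neg hq, ENNReal.one_rpow, setLIntegral_one, mulHaar_Ioo ha hab]

lemma haarNorm_Ioi_le_of_le_ofReal_min {a b : ℝ} (hq : 0 < q) (ha : 0 < a) (hab : a ≤ b)
    (hg_min : ∀ u ∈ Ioo 0 b, g u ≤ ENNReal.ofReal (min (u / a) 1))
    (hg_zero : ∀ u ∈ Ici b, g u = 0) :
    haarNorm q (Ioi 0) g ≤
      ENNReal.ofReal (1 / q.toReal + Real.log (b / a)) ^ (1 / q.toReal) := by
  rcases eq_or_ne q ∞ with rfl | hq_top
  · rw [haarNorm, if_pos rfl, ENNReal.toReal_top, _root_.div_zero, ENNReal.rpow_zero]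
    refine iSup₂_le fun u hu => ?_
    rcases lt_or_ge u b with hub | hub
    · exact (hg_min u ⟨hu, hub⟩).trans (ENNReal.ofReal_le_one.2 (min_le_right _ _))
    · exact (hg_zero u hub).trans_le zero_le
  have hQ : 0 < q.toReal := ENNReal.toReal_pos hq.ne' hq_top
  have near_zero : ∫⁻ u in Ioo 0 a, g u ^ q.toReal ∂mulHaar ≤ ENNReal.ofReal (1 / q.toReal) := by
    rw [← setLIntegral_Ioo_div_rpow_mulHaar hQ ha]
    refine setLIntegral_mono' measurableSet_Ioo fun u hu => ENNReal.rpow_le_rpow ?_ hQ.le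
    exact (hg_min u ⟨hu.1, hu.2.trans_le hab⟩).trans (ENNReal.ofReal_le_ofReal (min_le_left _ _))
  have middle : ∫⁻ u in Ico a b, g u ^ q.toReal ∂mulHaar ≤ ENNReal.ofReal (Real.log (b / a)) := by
    rw [← mulHaar_Ioo ha hab, ← setLIntegral_one, setLIntegral_congr Ioo_ae_eq_Ico]
    refine setLIntegral_mono' measurableSet_Ico fun u hu => ENNReal.rpow_le_one ?_ hQ.le
    exact (hg_min u ⟨ha.trans_le hu.1, hu.2⟩).trans (ENNReal.ofReal_le_one.2 (min_le_right _ _))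
  have tail : ∫⁻ u in Ici b, g u ^ q.toReal ∂mulHaar = 0 := by
    rw [setLIntegral_congr_fun (g := fun _ => 0) measurableSet_Ici, lintegral_zero]
    exact fun u hu => by simp only [hg_zero u hu, ENNReal.zero_rpow_of_pos hQ]
  rw [haarNorm, if_neg hq_top, ← Ioo_union_Ici_eq_Ioi ha, ← Ico_union_Ici_eq_Ici hab]
  gcongr
  calc _ ≤ ENNReal.ofReal (1 / q.toReal) + (ENNReal.ofReal (Real.log (b / a)) + 0) :=
        (lintegral_union_le _ _ _).trans (add_le_add near_zero
          ((lintegral_union_le _ _ _).trans (add_le_add middle tail.le)))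
    _ = _ := by
        rw [add_zero, ENNReal.ofReal_add (by positivity)
          (Real.log_nonneg ((one_le_div ha).2 hab))]

end haarNorm

/-! ### The rearrangement and the Lorentz quasi-norm -/

lemma setOf_ofReal_lt_ofReal_abs {α : Type*} {f : α → ℝ} {u : ℝ} (hu : 0 ≤ u) :
    {x | ENNReal.ofReal u < ENNReal.ofReal |f x|} = {x | u < |f x|} := by
  simp only [ENNReal.ofReal_lt_ofReal_iff_of_nonneg hu]

section Rearrangement

variable {α : Type} [MeasurableSpace α] {μ : Measure α} {f : α → ℝ}

lemma lt_rearr_iff {s : ℝ≥0∞} {t : ℝ} :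
    s < rearr μ f t ↔ ENNReal.ofReal t < μ {x | s < ENNReal.ofReal |f x|} := by
  constructor
  · exact fun h => lt_of_not_ge fun hle => h.not_ge (sInf_le hle)
  · intro h
    have hs : s < ∞ := lt_top_iff_ne_top.2 fun hs => by simp [hs] at h
    obtain ⟨s', hs'_anti, hs'_mem, hs'_lim⟩ := exists_seq_strictAnti_tendsto' hs
    have hunion : {x | s < ENNReal.ofReal |f x|} = ⋃ n, {x | s' n < ENNReal.ofReal |f x|} := by
      ext x
      simp only [mem_ofPred_eq, mem_iUnion]
      exact ⟨fun hx => (hs'_lim.eventually_lt_const hx).exists,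
        fun ⟨n, hn⟩ => (hs'_mem n).1.trans hn⟩
    have hmono : Monotone fun n => {x | s' n < ENNReal.ofReal |f x|} :=
      fun m n hmn x hx => (hs'_anti.antitone hmn).trans_lt hx
    rw [hunion, hmono.measure_iUnion, lt_iSup_iff] at h
    obtain ⟨n, hn⟩ := h
    refine (hs'_mem n).1.trans_le (le_sInf fun r hr => le_of_not_gt fun hrs => ?_)
    exact (hn.trans_le (measure_mono fun x hx => hrs.trans hx)).not_ge hr

variable (μ f) in
/-- The classical Lorentz quasi-norm of `L_{P,q}(μ)`, in terms of the distribution function. -/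
def lorentzNorm (P : ℝ) (q : ℝ≥0∞) : ℝ≥0∞ :=
  haarNorm q (Ioi 0) fun u => ENNReal.ofReal u * μ {x | u < |f x|} ^ (1 / P)

lemma lintegral_lt_rearr_swap {h : ℝ → ℝ → ℝ≥0∞} (hh : Measurable (Function.uncurry h)) :
    ∫⁻ t, ∫⁻ u in {u | ENNReal.ofReal u < rearr μ f t}, h t u ∂mulHaar ∂mulHaar =
      ∫⁻ u, ∫⁻ t in {t | ENNReal.ofReal t < μ {x | ENNReal.ofReal u < ENNReal.ofReal |f x|}},
        h t u ∂mulHaar ∂mulHaar := by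
  set distr : ℝ → ℝ≥0∞ := fun u => μ {x | ENNReal.ofReal u < ENNReal.ofReal |f x|}
  have hdistr : Antitone distr := fun u w huw =>
    measure_mono fun x hx => (ENNReal.ofReal_le_ofReal huw).trans_lt hx
  have hE : MeasurableSet {z : ℝ × ℝ | ENNReal.ofReal z.1 < distr z.2} :=
    measurableSet_lt (by fun_prop) (hdistr.measurable.comp measurable_snd)
  have hG := hh.indicator hE
  calc _ = ∫⁻ t, ∫⁻ u, {z : ℝ × ℝ | ENNReal.ofReal z.1 < distr z.2}.indicator
              (Function.uncurry h) (t, u) ∂mulHaar ∂mulHaar := by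
        refine lintegral_congr fun t => ?_
        have hsection : {u | ENNReal.ofReal u < rearr μ f t} = {u | ENNReal.ofReal t < distr u} :=
          ext fun u => lt_rearr_iff
        rw [← lintegral_indicator (measurableSet_lt (by fun_prop) measurable_const), hsection]
        rfl
    _ = ∫⁻ u, ∫⁻ t, {z : ℝ × ℝ | ENNReal.ofReal z.1 < distr z.2}.indicator
              (Function.uncurry h) (t, u) ∂mulHaar ∂mulHaar :=
        lintegral_lintegral_swap (f := fun t u => _) hG.aemeasurable
    _ = _ := by
        refine lintegral_congr fun u => ?_
        rw [← lintegral_indicator (measurableSet_lt (by fun_prop) measurable_const)]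
        rfl

lemma lintegral_rpow_mul_rearr {P Q : ℝ} (hP : 0 < P) (hQ : 0 < Q) :
    ∫⁻ t, (ENNReal.ofReal t ^ (1 / P) * rearr μ f t) ^ Q ∂mulHaar =
      ENNReal.ofReal P *
        ∫⁻ u, (ENNReal.ofReal u * μ {x | ENNReal.ofReal u < ENNReal.ofReal |f x|} ^ (1 / P)) ^ Q
          ∂mulHaar := by
  have hQP : 0 < Q / P := div_pos hQ hP
  have inner_u : ∀ t, (ENNReal.ofReal t ^ (1 / P) * rearr μ f t) ^ Q =
      ENNReal.ofReal Q * ∫⁻ u in {u | ENNReal.ofReal u < rearr μ f t},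
        ENNReal.ofReal t ^ (Q / P) * ENNReal.ofReal u ^ Q ∂mulHaar := by
    intro t
    rw [lintegral_const_mul _ (by fun_prop), setLIntegral_rpow_mulHaar_of_lt hQ,
      ENNReal.mul_rpow_of_nonneg _ _ hQ.le, ← ENNReal.rpow_mul, one_div_mul_eq_div,
      mul_left_comm, ENNReal.mul_div_cancel (ENNReal.ofReal_pos.2 hQ).ne' ENNReal.ofReal_ne_top]
  have inner_t : ∀ u a, ∫⁻ t in {t | ENNReal.ofReal t < a},
        ENNReal.ofReal t ^ (Q / P) * ENNReal.ofReal u ^ Q ∂mulHaar =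
      ENNReal.ofReal (P / Q) * (ENNReal.ofReal u * a ^ (1 / P)) ^ Q := by
    intro u a
    rw [lintegral_mul_const _ (by fun_prop), setLIntegral_rpow_mulHaar_of_lt hQP,
      ENNReal.mul_rpow_of_nonneg _ _ hQ.le, ← ENNReal.rpow_mul, one_div_mul_eq_div,
      div_eq_mul_inv, ← ENNReal.ofReal_inv_of_pos hQP, inv_div]
    ring
  simp only [inner_u]
  rw [lintegral_const_mul' _ _ ENNReal.ofReal_ne_top, lintegral_lt_rearr_swap (by fun_prop)]
  simp only [inner_t]
  rw [lintegral_const_mul' _ _ ENNReal.ofReal_ne_top, ← mul_assoc, ← ENNReal.ofReal_mul hQ.le,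
    mul_div_cancel₀ _ hQ.ne']

lemma iSup_rpow_mul_rearr {P : ℝ} (hP : 0 < P) :
    ⨆ t ∈ Ioi (0 : ℝ), ENNReal.ofReal t ^ (1 / P) * rearr μ f t =
      ⨆ u ∈ Ioi (0 : ℝ),
        ENNReal.ofReal u * μ {x | ENNReal.ofReal u < ENNReal.ofReal |f x|} ^ (1 / P) := by
  have expand_rearr : ∀ t, ENNReal.ofReal t ^ (1 / P) * rearr μ f t =
      ⨆ u ∈ Ioi (0 : ℝ), ⨆ _ : ENNReal.ofReal u < rearr μ f t,
        ENNReal.ofReal t ^ (1 / P) * ENNReal.ofReal u := by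
    intro t
    have h := iSup_rpow_of_lt one_pos (rearr μ f t)
    simp only [ENNReal.rpow_one] at h
    conv_lhs => rw [← h]
    simp only [ENNReal.mul_iSup]
  have expand_distr : ∀ u,
      ENNReal.ofReal u * μ {x | ENNReal.ofReal u < ENNReal.ofReal |f x|} ^ (1 / P) =
        ⨆ t ∈ Ioi (0 : ℝ), ⨆ _ : ENNReal.ofReal u < rearr μ f t,
          ENNReal.ofReal t ^ (1 / P) * ENNReal.ofReal u := by
    intro u
    rw [← iSup_rpow_of_lt (one_div_pos.2 hP)]
    simp only [ENNReal.mul_iSup, lt_rearr_iff, mul_comm]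
  simp only [expand_rearr, expand_distr]
  exact iSup₂_comm _

lemma haarNorm_rearr {P : ℝ} (hP : 0 < P) {q : ℝ≥0∞} (hq : 0 < q) :
    haarNorm q (Ioi 0) (fun t => ENNReal.ofReal t ^ (1 / P) * rearr μ f t) =
      ENNReal.ofReal P ^ (1 / q.toReal) * lorentzNorm μ f P q := by
  have hdistr : ∀ u ∈ Ioi (0 : ℝ), μ {x | u < |f x|} =
      μ {x | ENNReal.ofReal u < ENNReal.ofReal |f x|} := fun u hu => by
    rw [setOf_ofReal_lt_ofReal_abs (le_of_lt hu)]
  unfold lorentzNorm haarNorm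
  split_ifs with hq_top
  -- the constant is `1` here, since `1 / ∞.toReal = 1 / 0 = 0`
  · rw [hq_top, ENNReal.toReal_top, _root_.div_zero, ENNReal.rpow_zero, one_mul,
      iSup_rpow_mul_rearr hP]
    exact biSup_congr fun u hu => by rw [hdistr u hu]
  · have hQ : 0 < q.toReal := ENNReal.toReal_pos hq.ne' hq_top
    rw [setLIntegral_Ioi_mulHaar, lintegral_rpow_mul_rearr hP hQ,
      ENNReal.mul_rpow_of_nonneg _ _ (by positivity), ← setLIntegral_Ioi_mulHaar]
    congr 2
    exact setLIntegral_congr_fun measurableSet_Ioi fun u hu => by simp only [hdistr u hu]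

lemma hardy_eq_haarNorm {r ε : ℝ} {v : ℝ≥0∞} :
    hardy μ r v ε f =
      haarNorm v (Ioo 0 ε) fun t => ENNReal.ofReal t ^ r * rearr μ f t := by
  simp only [hardy, haarNorm, setLIntegral_mulHaar_of_subset_Ioi measurableSet_Ioo
    (Ioo_subset_Ioi_self : Ioo 0 ε ⊆ Ioi 0)]

lemma hardy_le_lorentzNorm {P : ℝ} (hP : 0 < P) {q : ℝ≥0∞} (hq : 0 < q) (ε : ℝ) :
    hardy μ (1 / P) q ε f ≤ ENNReal.ofReal P ^ (1 / q.toReal) * lorentzNorm μ f P q := by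
  rw [hardy_eq_haarNorm, ← haarNorm_rearr hP hq]
  exact haarNorm_mono_set Ioo_subset_Ioi_self

end Rearrangement

/-! ### Mixed quasi-norms on a product of finite measure spaces -/

section OneVariable

variable {α : Type} [MeasurableSpace α] {μ : Measure α} {p m : ℝ≥0∞} {g : α → ℝ≥0∞}

lemma lpNorm1_eq_eLpNorm (hp : 0 < p) : lpNorm1 p μ g = eLpNorm g p μ := by
  unfold lpNorm1
  split_ifs with hp_top
  · simp only [hp_top, eLpNorm_exponent_top, eLpNormEssSup_eq_essSup_enorm, enorm_eq_self]
  · simp only [eLpNorm_eq_lintegral_rpow_enorm_toReal hp.ne' hp_top, enorm_eq_self]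

lemma lpNorm1_mono {h : α → ℝ≥0∞} (hgh : g ≤ h) : lpNorm1 p μ g ≤ lpNorm1 p μ h := by
  unfold lpNorm1
  split_ifs
  · exact essSup_mono_ae (.of_forall hgh)
  · gcongr
    exact hgh _

lemma lpNorm1_const_mul (hp : 0 < p) (hg : Measurable g) (c : ℝ≥0∞) :
    lpNorm1 p μ (fun x => c * g x) = c * lpNorm1 p μ g := by
  unfold lpNorm1
  split_ifs with hp_top
  · exact ENNReal.essSup_const_mul
  · have hP : 0 < p.toReal := ENNReal.toReal_pos hp.ne' hp_top
    simp only [ENNReal.mul_rpow_of_nonneg _ _ hP.le]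
    rw [lintegral_const_mul _ (hg.pow_const _), ENNReal.mul_rpow_of_nonneg _ _ (by positivity),
      ← ENNReal.rpow_mul, mul_one_div_cancel hP.ne', ENNReal.rpow_one]

lemma lpNorm1_le_measure_univ_rpow_mul_lpNorm1 (hm : 0 < m) (hmp : m ≤ p) (hg : Measurable g) :
    lpNorm1 m μ g ≤ μ univ ^ (1 / m.toReal - 1 / p.toReal) * lpNorm1 p μ g := by
  rw [lpNorm1_eq_eLpNorm hm, lpNorm1_eq_eLpNorm (hm.trans_le hmp), mul_comm]
  exact eLpNorm_le_eLpNorm_mul_rpow_measure_univ hmp hg.aestronglyMeasurable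

lemma lpNorm1_indicator_one (hp : 0 < p) (hp_top : p ≠ ∞) {E : Set α} (hE : MeasurableSet E) :
    lpNorm1 p μ (E.indicator 1) = μ E ^ (1 / p.toReal) := by
  rw [lpNorm1_eq_eLpNorm hp, Pi.one_def, eLpNorm_indicator_const hE hp.ne' hp_top, enorm_eq_self,
    one_mul]

lemma lpNorm1_one_ne_top [IsFiniteMeasure μ] (hp : 0 < p) : lpNorm1 p μ 1 ≠ ∞ := by
  rw [lpNorm1_eq_eLpNorm hp, Pi.one_def]
  exact ((memLp_const_enorm (c := (1 : ℝ≥0∞)) (by simp)).eLpNorm_lt_top).ne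

lemma measurable_lpNorm1 {β : Type*} [MeasurableSpace β] [SFinite μ] {F : α × β → ℝ≥0∞}
    (hF : Measurable F) : Measurable fun y => lpNorm1 p μ fun x => F (x, y) := by
  unfold lpNorm1
  split_ifs
  · refine measurable_of_Iic fun a => ?_
    have hpreimage : (fun y => essSup (fun x => F (x, y)) μ) ⁻¹' Iic a =
        {y | μ ((fun x => (x, y)) ⁻¹' (F ⁻¹' Ioi a)) = 0} := by
      ext y
      have hset : (fun x => (x, y)) ⁻¹' (F ⁻¹' Ioi a) = {x | ¬ F (x, y) ≤ a} := by
        simp only [not_le]; rfl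
      rw [mem_ofPred_eq, hset, ← ae_iff]
      exact ⟨fun hy => (ENNReal.ae_le_essSup _).mono fun x hx => hx.trans hy,
        fun hy => essSup_le_of_ae_le a hy⟩
    rw [hpreimage]
    exact measurable_measure_prodMk_right (hF measurableSet_Ioi) (measurableSet_singleton 0)
  · exact (Measurable.lintegral_prod_left' (hF.pow_const _)).pow_const _

end OneVariable

lemma measurable_finCons {d : ℕ} {α : Fin (d + 1) → Type*} [∀ i, MeasurableSpace (α i)] :
    Measurable fun z : α 0 × (∀ i : Fin d, α i.succ) => (Fin.cons z.1 z.2 : ∀ i, α i) := by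
  refine measurable_pi_iff.2 (Fin.cases ?_ fun i => ?_)
  · simpa only [Fin.cons_zero] using measurable_fst
  · simp only [Fin.cons_succ]
    exact (measurable_pi_apply i).comp measurable_snd

lemma lintegral_pi_finCons {d : ℕ} {α : Fin (d + 1) → Type*} [∀ i, MeasurableSpace (α i)]
    (μ : ∀ i, Measure (α i)) [∀ i, SigmaFinite (μ i)] {f : (∀ i, α i) → ℝ≥0∞} (hf : Measurable f) :
    ∫⁻ x, f x ∂Measure.pi μ =
      ∫⁻ y, ∫⁻ x, f (Fin.cons x y) ∂μ 0 ∂Measure.pi fun i => μ i.succ := by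
  have hcons (z : α 0 × (∀ i : Fin d, α i.succ)) :
      (MeasurableEquiv.piFinSuccAbove α 0).symm z = Fin.cons z.1 z.2 :=
    funext (Fin.cases rfl fun _ => rfl)
  rw [← (measurePreserving_piFinSuccAbove μ 0).symm.lintegral_comp hf,
    ← lintegral_prod_symm (fun z : α 0 × (∀ i : Fin d, α i.succ) => f (Fin.cons z.1 z.2))
      (hf.comp measurable_finCons).aemeasurable]
  exact lintegral_congr fun z => congrArg f (hcons z)

section Mixed

variable {m q : ℝ≥0∞}

lemma lpNorm1_pi_succ {d : ℕ} {α : Fin (d + 1) → Type} [∀ i, MeasurableSpace (α i)]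
    (μ : ∀ i, Measure (α i)) [∀ i, SigmaFinite (μ i)] (hm : 0 < m) (hm_top : m ≠ ∞)
    {f : (∀ i, α i) → ℝ≥0∞} (hf : Measurable f) :
    lpNorm1 m (Measure.pi μ) f = lpNorm1 m (Measure.pi fun i => μ i.succ)
      fun y => lpNorm1 m (μ 0) fun x => f (Fin.cons x y) := by
  have hM : 0 < m.toReal := ENNReal.toReal_pos hm.ne' hm_top
  simp only [lpNorm1, if_neg hm_top, ← ENNReal.rpow_mul, one_div_mul_cancel hM.ne',
    ENNReal.rpow_one, lintegral_pi_finCons μ (hf.pow_const m.toReal)]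

lemma lpNorm1_pi_le_mixedNormE {d : ℕ} {α : Fin d → Type} [∀ i, MeasurableSpace (α i)]
    (μ : ∀ i, Measure (α i)) [∀ i, IsFiniteMeasure (μ i)] {p : Fin d → ℝ≥0∞}
    (hm : 0 < m) (hm_top : m ≠ ∞) (hmp : ∀ i, m ≤ p i)
    {f : (∀ i, α i) → ℝ≥0∞} (hf : Measurable f) :
    lpNorm1 m (Measure.pi μ) f ≤
      (∏ i, μ i univ ^ (1 / m.toReal - 1 / (p i).toReal)) * mixedNormE μ p f := by
  induction d with
  | zero =>
    have hM : 0 < m.toReal := ENNReal.toReal_pos hm.ne' hm_top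
    rw [lpNorm1, if_neg hm_top, Measure.pi_of_empty, lintegral_dirac' _ (hf.pow_const _),
      ← ENNReal.rpow_mul, mul_one_div_cancel hM.ne', ENNReal.rpow_one, Finset.univ_eq_empty,
      Finset.prod_empty, one_mul]
    simp only [mixedNormE]
    exact (congrArg f (Subsingleton.elim _ _)).le
  | succ d ih =>
    have hF : Measurable fun z : α 0 × (∀ i : Fin d, α i.succ) => f (Fin.cons z.1 z.2) :=
      hf.comp measurable_finCons
    have hinner := measurable_lpNorm1 (p := p 0) (μ := μ 0) hF
    rw [lpNorm1_pi_succ μ hm hm_top hf, Fin.prod_univ_succ, mul_assoc, mixedNormE]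
    calc _ ≤ lpNorm1 m (Measure.pi fun i => μ i.succ) fun y =>
            μ 0 univ ^ (1 / m.toReal - 1 / (p 0).toReal) *
              lpNorm1 (p 0) (μ 0) fun x => f (Fin.cons x y) :=
          lpNorm1_mono fun y =>
            lpNorm1_le_measure_univ_rpow_mul_lpNorm1 hm (hmp 0) (hF.comp measurable_prodMk_right)
      _ = _ := lpNorm1_const_mul hm hinner _
      _ ≤ _ := by
          gcongr
          exact ih (fun i => μ i.succ) (fun i => hmp i.succ) hinner

variable {d : ℕ} {α : Fin d → Type} [∀ i, MeasurableSpace (α i)] {μ : ∀ i, Measure (α i)}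
  {p : Fin d → ℝ≥0∞}

lemma mixedNorm_indicator_one (A : Set (∀ i, α i)) :
    mixedNorm μ p (A.indicator fun _ => 1) = mixedNormE μ p (A.indicator 1) := by
  refine congrArg (mixedNormE μ p) (funext fun x => ?_)
  by_cases hx : x ∈ A <;> simp [hx]

lemma measure_rpow_le_mixedNorm_indicator [∀ i, IsFiniteMeasure (μ i)]
    (hm : 0 < m) (hm_top : m ≠ ∞) (hmp : ∀ i, m ≤ p i)
    {A : Set (∀ i, α i)} (hA : MeasurableSet A) :
    Measure.pi μ A ^ (1 / m.toReal) ≤ (∏ i, μ i univ ^ (1 / m.toReal - 1 / (p i).toReal)) *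
      mixedNorm μ p (A.indicator fun _ => 1) := by
  rw [mixedNorm_indicator_one, ← lpNorm1_indicator_one hm hm_top hA]
  exact lpNorm1_pi_le_mixedNormE μ hm hm_top hmp (measurable_one.indicator hA)

lemma mixedLorentzNorm_eq_haarNorm (f : (∀ i, α i) → ℝ) :
    mixedLorentzNorm μ p q f = haarNorm q (Ioi 0) fun u =>
      ENNReal.ofReal u * mixedNorm μ p ({x | u < |f x|}.indicator fun _ => 1) := by
  simp only [mixedLorentzNorm, haarNorm,
    setLIntegral_mulHaar_of_subset_Ioi measurableSet_Ioi subset_rfl, mem_Ioi]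

lemma prod_measure_univ_rpow_ne_top [∀ i, IsFiniteMeasure (μ i)]
    (hm : 0 < m) (hm_top : m ≠ ∞) (hmp : ∀ i, m ≤ p i) :
    ∏ i, μ i univ ^ (1 / m.toReal - 1 / (p i).toReal) ≠ ∞ := by
  refine ENNReal.prod_ne_top fun i _ => ENNReal.rpow_ne_top_of_nonneg ?_ (measure_ne_top _ _)
  have hM : 0 < m.toReal := ENNReal.toReal_pos hm.ne' hm_top
  rcases eq_or_ne (p i) ∞ with hi | hi
  · rw [hi, ENNReal.toReal_top, _root_.div_zero, sub_zero]
    positivity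
  · exact sub_nonneg.2 (one_div_le_one_div_of_le hM (ENNReal.toReal_mono hi (hmp i)))

lemma lorentzNorm_le_mixedLorentzNorm [∀ i, IsFiniteMeasure (μ i)]
    (hm : 0 < m) (hm_top : m ≠ ∞) (hmp : ∀ i, m ≤ p i) (hq : 0 < q)
    {f : (∀ i, α i) → ℝ} (hf : Measurable f) :
    lorentzNorm (Measure.pi μ) f m.toReal q ≤
      (∏ i, μ i univ ^ (1 / m.toReal - 1 / (p i).toReal)) * mixedLorentzNorm μ p q f := by
  rw [mixedLorentzNorm_eq_haarNorm]
  refine haarNorm_le_const_mul hq measurableSet_Ioi ?_ fun u _ => ?_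
  · exact prod_measure_univ_rpow_ne_top hm hm_top hmp
  · rw [mul_left_comm]
    gcongr
    exact measure_rpow_le_mixedNorm_indicator hm hm_top hmp
      (measurableSet_lt measurable_const hf.abs)

lemma mixedNormE_mul_prod (hp : ∀ i, 0 < p i) {g : ∀ i, α i → ℝ≥0∞} (hg : ∀ i, Measurable (g i))
    (c : ℝ≥0∞) :
    mixedNormE μ p (fun x => c * ∏ i, g i (x i)) = c * ∏ i, lpNorm1 (p i) (μ i) (g i) := by
  induction d generalizing c with
  | zero => simp only [mixedNormE, Finset.univ_eq_empty, Finset.prod_empty]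
  | succ d ih =>
    have hinner (y : ∀ i : Fin d, α i.succ) : (lpNorm1 (p 0) (μ 0) fun x =>
          c * ∏ i, g i ((Fin.cons x y : ∀ i, α i) i)) =
        (c * lpNorm1 (p 0) (μ 0) (g 0)) * ∏ i : Fin d, g i.succ (y i) := by
      have hsplit (x : α 0) : c * ∏ i, g i ((Fin.cons x y : ∀ i, α i) i) =
          (c * ∏ i : Fin d, g i.succ (y i)) * g 0 x := by
        rw [Fin.prod_univ_succ, Fin.cons_zero, mul_comm (g 0 x), ← mul_assoc]
        rfl
      simp only [hsplit]
      rw [lpNorm1_const_mul (hp 0) (hg 0), mul_right_comm]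
    simp only [mixedNormE, hinner]
    rw [ih (fun i => hp i.succ) (fun i => hg i.succ), Fin.prod_univ_succ, mul_assoc]

lemma mixedNorm_indicator_univ_pi (hp : ∀ i, 0 < p i) {s : ∀ i, Set (α i)}
    (hs : ∀ i, MeasurableSet (s i)) :
    mixedNorm μ p ((univ.pi s).indicator fun _ => 1) =
      ∏ i, lpNorm1 (p i) (μ i) ((s i).indicator 1) := by
  have hprod : (univ.pi s).indicator (1 : (∀ i, α i) → ℝ≥0∞) =
      fun x => 1 * ∏ i, (s i).indicator 1 (x i) := by
    classical
    ext x
    simp only [indicator_apply, mem_univ_pi, Pi.one_apply, Finset.prod_ite_zero, Finset.mem_univ,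
      true_imp_iff, Finset.prod_const_one, one_mul]
  rw [mixedNorm_indicator_one, hprod,
    mixedNormE_mul_prod hp (fun i => measurable_one.indicator (hs i)), one_mul]

lemma mixedNorm_indicator_eval_preimage (hp : ∀ i, 0 < p i) {j : Fin d} (hj : p j ≠ ∞)
    {E : Set (α j)} (hE : MeasurableSet E) :
    mixedNorm μ p ((Function.eval j ⁻¹' E).indicator fun _ => 1) =
      μ j E ^ (1 / (p j).toReal) * ∏ i ∈ Finset.univ.erase j, lpNorm1 (p i) (μ i) 1 := by
  have hs (i) : MeasurableSet (Function.update (fun i => (univ : Set (α i))) j E i) := by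
    rcases eq_or_ne i j with rfl | hij
    · rwa [Function.update_self]
    · rw [Function.update_of_ne hij]
      exact MeasurableSet.univ
  rw [eval_preimage, mixedNorm_indicator_univ_pi hp hs,
    ← Finset.mul_prod_erase _ _ (Finset.mem_univ j), Function.update_self,
    lpNorm1_indicator_one (hp j) hj hE]
  congr 1
  refine Finset.prod_congr rfl fun i hi => ?_
  rw [Function.update_of_ne (Finset.ne_of_mem_erase hi), indicator_univ]

lemma exists_mixedNorm_indicator_eval_preimage_le [∀ i, IsFiniteMeasure (μ i)]
    [∀ i, NeZero (μ i)] (hp : ∀ i, 0 < p i) {j : Fin d} (hj : p j ≠ ∞) :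
    ∃ C ≠ ∞, ∀ E : Set (α j), MeasurableSet E →
      mixedNorm μ p ((Function.eval j ⁻¹' E).indicator fun _ => 1) ≤
        C * Measure.pi μ (Function.eval j ⁻¹' E) ^ (1 / (p j).toReal) := by
  set A := ∏ i ∈ Finset.univ.erase j, lpNorm1 (p i) (μ i) 1
  set B := ∏ i ∈ Finset.univ.erase j, μ i univ
  set r := 1 / (p j).toReal
  have hA_top : A ≠ ∞ := ENNReal.prod_ne_top fun i _ => lpNorm1_one_ne_top (hp i)
  have hB_zero : B ≠ 0 := Finset.prod_ne_zero_iff.2 fun i _ => NeZero.ne (μ i univ)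
  have hB_top : B ≠ ∞ := ENNReal.prod_ne_top fun i _ => measure_ne_top _ _
  refine ⟨A * B ^ (-r),
    ENNReal.mul_ne_top hA_top (ENNReal.rpow_ne_top_of_ne_zero hB_zero hB_top), fun E hE => ?_⟩
  have hmeasure : Measure.pi μ (Function.eval j ⁻¹' E) = B * μ j E := by
    rw [← Measure.map_apply (measurable_pi_apply j) hE, Measure.pi_map_eval, Measure.smul_apply,
      smul_eq_mul]
  rw [mixedNorm_indicator_eval_preimage hp hj hE, hmeasure,
    ENNReal.mul_rpow_of_ne_top hB_top (measure_ne_top _ _), mul_assoc A, ← mul_assoc (B ^ (-r)),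
    ← ENNReal.rpow_add _ _ hB_zero hB_top, neg_add_cancel, ENNReal.rpow_zero, one_mul, mul_comm]

lemma exists_mixedLorentzNorm_comp_eval_le [∀ i, IsFiniteMeasure (μ i)]
    [∀ i, NeZero (μ i)] (hp : ∀ i, 0 < p i) {j : Fin d} (hj : p j ≠ ∞) (hq : 0 < q) :
    ∃ C ≠ ∞, ∀ g : α j → ℝ, Measurable g →
      mixedLorentzNorm μ p q (fun x => g (x j)) ≤
        C * lorentzNorm (Measure.pi μ) (fun x => g (x j)) (p j).toReal q := by
  obtain ⟨C, hC, hindicator⟩ := exists_mixedNorm_indicator_eval_preimage_le (μ := μ) hp hj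
  refine ⟨C, hC, fun g hg => ?_⟩
  rw [mixedLorentzNorm_eq_haarNorm]
  refine haarNorm_le_const_mul hq measurableSet_Ioi hC fun u _ => ?_
  rw [mul_left_comm]
  gcongr
  exact hindicator {y | u < |g y|} (measurableSet_lt measurable_const hg.abs)

end Mixed

/-! ### The probability integral transform -/

section IntegralTransform

variable {ν : Measure ℝ} [IsFiniteMeasure ν]

lemma monotone_measureReal_Iic : Monotone fun y => ν.real (Iic y) :=
  fun _ _ hxy => measureReal_mono (Iic_subset_Iic.2 hxy)

lemma tendsto_measureReal_Iic_atBot : Tendsto (fun y => ν.real (Iic y)) atBot (nhds 0) := by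
  have hlim := tendsto_measure_iInter_atBot (μ := ν) (s := Iic)
    (fun _ => measurableSet_Iic.nullMeasurableSet) (fun _ _ => Iic_subset_Iic.2)
    ⟨0, measure_ne_top ν _⟩
  rw [iInter_Iic_eq_empty_iff.2 (range_id ▸ not_bddBelow_univ), measure_empty] at hlim
  exact (ENNReal.tendsto_toReal ENNReal.zero_ne_top).comp hlim

lemma tendsto_measureReal_Iic_atTop :
    Tendsto (fun y => ν.real (Iic y)) atTop (nhds (ν.real univ)) :=
  (ENNReal.tendsto_toReal (measure_ne_top ν univ)).comp (tendsto_measure_Iic_atTop ν)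

variable [NullSingletonClass ν]

lemma continuous_measureReal_Iic : Continuous fun y => ν.real (Iic y) := by
  have hprimitive : (fun y => ν.real (Iic y)) =
      fun y => ν.real (Iic 0) + ∫ _ in 0..y, (1 : ℝ) ∂ν := by
    ext y
    rw [← intervalIntegral.integral_Iic_sub_Iic integrableOn_const integrableOn_const]
    simp
  rw [hprimitive]
  exact continuous_const.add ((integrable_const (1 : ℝ)).continuous_primitive 0)

lemma Ioo_subset_range_measureReal_Iic :
    Ioo 0 (ν.real univ) ⊆ range fun y => ν.real (Iic y) := fun _ hb =>
  mem_range_of_exists_le_of_exists_ge continuous_measureReal_Iic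
    ((tendsto_measureReal_Iic_atBot.eventually_le_const hb.1).exists)
    ((tendsto_measureReal_Iic_atTop.eventually_const_le hb.2).exists)

lemma measureReal_measureReal_Iic_le {a : ℝ} (ha : a ∈ Icc 0 (ν.real univ)) :
    ν.real {y | ν.real (Iic y) ≤ a} = a := by
  refine le_antisymm (le_of_not_gt fun hlt => ?_) (le_of_not_gt fun hlt => ?_)
  · obtain ⟨b, hab, hb⟩ := exists_between hlt
    obtain ⟨x, rfl⟩ := Ioo_subset_range_measureReal_Iic
      ⟨ha.1.trans_lt hab, hb.trans_le (measureReal_mono (subset_univ _))⟩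
    refine hb.not_ge (measureReal_mono fun y hy => ?_)
    exact (monotone_measureReal_Iic.reflect_lt (lt_of_le_of_lt hy hab)).le
  · obtain ⟨b, hb, hba⟩ := exists_between hlt
    obtain ⟨x, rfl⟩ := Ioo_subset_range_measureReal_Iic
      ⟨measureReal_nonneg.trans_lt hb, hba.trans_le ha.2⟩
    refine hb.not_ge (measureReal_mono fun y hy => ?_)
    exact (monotone_measureReal_Iic hy).trans hba.le

lemma measurePreserving_measureReal_Iic :
    MeasurePreserving (fun y => ν.real (Iic y)) ν (volume.restrict (Ioo 0 (ν.real univ))) := by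
  have hmeas : Measurable fun y => ν.real (Iic y) := monotone_measureReal_Iic.measurable
  refine ⟨hmeas, Measure.ext_of_Iic _ _ fun a => ?_⟩
  rw [Measure.map_apply hmeas measurableSet_Iic, restrict_Ioo_eq_restrict_Ioc,
    Measure.restrict_apply measurableSet_Iic, inter_comm, Ioc_inter_Iic, Real.volume_Ioc, sub_zero]
  rcases lt_or_ge a 0 with ha | ha
  · have hempty : (fun y => ν.real (Iic y)) ⁻¹' Iic a = ∅ :=
      eq_empty_of_forall_notMem fun y hy => (ha.trans_le measureReal_nonneg).not_ge hy
    rw [hempty, measure_empty, ENNReal.ofReal_of_nonpos (inf_le_right.trans ha.le)]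
  · have hset : (fun y => ν.real (Iic y)) ⁻¹' Iic a =
        {y | ν.real (Iic y) ≤ ν.real univ ⊓ a} := by
      ext y
      exact (le_min_iff.trans (and_iff_right (measureReal_mono (subset_univ _)))).symm
    rw [hset, ← ENNReal.ofReal_toReal (measure_ne_top ν _)]
    exact congrArg _ (measureReal_measureReal_Iic_le ⟨le_min measureReal_nonneg ha, inf_le_left⟩)

end IntegralTransform

/-! ### Extremal functions -/

/-- The power `y ^ (-1/P)`, truncated at height `δ ^ (-1/P)`. Composed with a uniformly distributed
variable, its `L_{P,q}` quasi-norm grows like `(log (1/δ)) ^ (1/q)` as `δ → 0`. -/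
def truncatedPower (P δ y : ℝ) : ℝ := (max y δ) ^ (-(1 / P))

section TruncatedPower

variable {α : Type} [MeasurableSpace α] {μ : Measure α} {U : α → ℝ} {M P δ : ℝ}

lemma measurable_truncatedPower : Measurable (truncatedPower P δ) := by
  unfold truncatedPower
  fun_prop

lemma lt_rpow_neg_one_div_iff (hP : 0 < P) {u y : ℝ} (hu : 0 < u) (hy : 0 < y) :
    u < y ^ (-(1 / P)) ↔ y < u ^ (-P) := by
  rw [one_div, ← inv_neg]
  exact Real.lt_rpow_inv_iff_of_neg hu hy (neg_lt_zero.2 hP)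

lemma lt_abs_truncatedPower_iff (hP : 0 < P) (hδ : 0 < δ) {u y : ℝ} (hu : 0 < u) :
    u < |truncatedPower P δ y| ↔ max y δ < u ^ (-P) := by
  have hmax : 0 < max y δ := lt_max_of_lt_right hδ
  rw [truncatedPower, abs_of_pos (Real.rpow_pos_of_pos hmax _)]
  exact lt_rpow_neg_one_div_iff hP hu hmax

lemma measure_lt_abs_truncatedPower
    (hU : MeasurePreserving U μ (volume.restrict (Ioo 0 M))) (hP : 0 < P) (hδ : 0 < δ)
    {u : ℝ} (hu : 0 < u) (hδu : δ < u ^ (-P)) :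
    μ {x | u < |truncatedPower P δ (U x)|} = ENNReal.ofReal (min M (u ^ (-P))) := by
  have hset : {x | u < |truncatedPower P δ (U x)|} = U ⁻¹' Iio (u ^ (-P)) := by
    ext x
    exact (lt_abs_truncatedPower_iff hP hδ hu).trans (max_lt_iff.trans (and_iff_left hδu))
  rw [hset, hU.measure_preimage measurableSet_Iio.nullMeasurableSet,
    Measure.restrict_apply measurableSet_Iio, inter_comm, Ioo_inter_Iio, Real.volume_Ioo, sub_zero]

lemma measure_lt_abs_truncatedPower_eq_zero (hP : 0 < P) (hδ : 0 < δ) {u : ℝ} (hu : 0 < u)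
    (hδu : u ^ (-P) ≤ δ) : μ {x | u < |truncatedPower P δ (U x)|} = 0 := by
  have hempty : {x | u < |truncatedPower P δ (U x)|} = ∅ :=
    eq_empty_of_forall_notMem fun x hx =>
      ((lt_abs_truncatedPower_iff hP hδ hu).1 hx).not_ge (hδu.trans (le_max_right _ _))
  rw [hempty, measure_empty]

lemma lorentzNorm_truncatedPower_le (hU : MeasurePreserving U μ (volume.restrict (Ioo 0 M)))
    (hP : 0 < P) (hδ : 0 < δ) (hδM : δ ≤ M) {q : ℝ≥0∞} (hq : 0 < q) :
    lorentzNorm μ (fun x => truncatedPower P δ (U x)) P q ≤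
      ENNReal.ofReal (1 / q.toReal + Real.log (M / δ) / P) ^ (1 / q.toReal) := by
  have hM : 0 < M := hδ.trans_le hδM
  have hneg : -(1 / P) < 0 := by simpa using hP
  have hlog : Real.log (δ ^ (-(1 / P)) / M ^ (-(1 / P))) = Real.log (M / δ) / P := by
    rw [← Real.div_rpow hδ.le hM.le, Real.log_rpow (div_pos hδ hM), Real.log_div hδ.ne' hM.ne',
      Real.log_div hM.ne' hδ.ne']
    ring
  rw [lorentzNorm, ← hlog]
  refine haarNorm_Ioi_le_of_le_ofReal_min hq (Real.rpow_pos_of_pos hM _)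
    (Real.rpow_le_rpow_of_nonpos hδ hδM hneg.le) (fun u hu => ?_) fun u hu => ?_
  · have hu_pow : 0 < u ^ (-P) := Real.rpow_pos_of_pos hu.1 _
    have hmin_pos : 0 < min M (u ^ (-P)) := lt_min hM hu_pow
    rw [measure_lt_abs_truncatedPower hU hP hδ hu.1 ((lt_rpow_neg_one_div_iff hP hu.1 hδ).1 hu.2),
      ENNReal.ofReal_rpow_of_pos hmin_pos, ← ENNReal.ofReal_mul hu.1.le]
    refine ENNReal.ofReal_le_ofReal (le_min ?_ ?_)
    · rw [Real.rpow_neg hM.le, div_inv_eq_mul]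
      have hu_pos := hu.1
      gcongr
      exact min_le_left _ _
    · calc u * min M (u ^ (-P)) ^ (1 / P) ≤ u * (u ^ (-P)) ^ (1 / P) := by
            have hu_pos := hu.1
            gcongr
            exact min_le_right _ _
        _ = 1 := by
            rw [← Real.rpow_mul hu.1.le, neg_mul, mul_one_div_cancel hP.ne', Real.rpow_neg_one,
              mul_inv_cancel₀ hu.1.ne']
  · have hu_pos : 0 < u := (Real.rpow_pos_of_pos hδ _).trans_le hu
    rw [measure_lt_abs_truncatedPower_eq_zero hP hδ hu_pos
        (not_lt.1 (mt (lt_rpow_neg_one_div_iff hP hu_pos hδ).2 (not_lt.2 hu))),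
      ENNReal.zero_rpow_of_pos (one_div_pos.2 hP), mul_zero]

lemma ofReal_rpow_le_rearr_truncatedPower
    (hU : MeasurePreserving U μ (volume.restrict (Ioo 0 M))) (hP : 0 < P) (hδ : 0 < δ)
    {t : ℝ} (ht : t ∈ Ioo δ M) :
    ENNReal.ofReal (t ^ (-(1 / P))) ≤ rearr μ (fun x => truncatedPower P δ (U x)) t := by
  have ht_pos : 0 < t := hδ.trans ht.1
  refine le_of_forall_lt fun s hs => ?_
  obtain ⟨r, -, hsr, hrt⟩ := ENNReal.lt_iff_exists_real_btwn.1 hs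
  have hr : 0 < r := ENNReal.ofReal_pos.1 (zero_le.trans_lt hsr)
  have htr : t < r ^ (-P) := by
    rw [ENNReal.ofReal_lt_ofReal_iff_of_nonneg hr.le] at hrt
    exact (lt_rpow_neg_one_div_iff hP hr ht_pos).1 hrt
  rw [lt_rearr_iff]
  calc ENNReal.ofReal t < ENNReal.ofReal (min M (r ^ (-P))) :=
        (ENNReal.ofReal_lt_ofReal_iff_of_nonneg ht_pos.le).2 (lt_min ht.2 htr)
    _ = μ {x | r < |truncatedPower P δ (U x)|} :=
        (measure_lt_abs_truncatedPower hU hP hδ hr (ht.1.trans htr)).symm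
    _ ≤ μ {x | s < ENNReal.ofReal |truncatedPower P δ (U x)|} :=
        measure_mono fun x hx => hsr.trans_le (ENNReal.ofReal_le_ofReal (le_of_lt hx))

lemma ofReal_log_rpow_le_hardy_truncatedPower
    (hU : MeasurePreserving U μ (volume.restrict (Ioo 0 M))) (hP : 0 < P) (hδ : 0 < δ)
    {v : ℝ≥0∞} (hv : v ≠ ∞) {ε : ℝ} (hδε : δ ≤ min ε M) :
    ENNReal.ofReal (Real.log (min ε M / δ)) ^ (1 / v.toReal) ≤
      hardy μ (1 / P) v ε (fun x => truncatedPower P δ (U x)) := by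
  rw [hardy_eq_haarNorm, ← haarNorm_one_Ioo hv hδ hδε]
  refine (haarNorm_mono measurableSet_Ioo fun t ht => ?_).trans
    (haarNorm_mono_set (Ioo_subset_Ioo hδ.le (min_le_left _ _)))
  have ht_pos : 0 < t := hδ.trans ht.1
  calc (1 : ℝ≥0∞) = ENNReal.ofReal t ^ (1 / P) * ENNReal.ofReal (t ^ (-(1 / P))) := by
        rw [ENNReal.ofReal_rpow_of_pos ht_pos, ← ENNReal.ofReal_mul (by positivity),
          ← Real.rpow_add ht_pos, add_neg_cancel, Real.rpow_zero, ENNReal.ofReal_one]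
    _ ≤ _ := by
        gcongr
        exact ofReal_rpow_le_rearr_truncatedPower hU hP hδ ⟨ht.1, ht.2.trans_le (min_le_right _ _)⟩

end TruncatedPower

/-! ### Sharpness of the index -/

lemma eventually_mul_rpow_lt_rpow {κ θ : ℝ} (hθ : 0 ≤ θ) (hθκ : θ < κ) {r : ℝ} (hr : 0 < r)
    (c a b : ℝ) : ∀ᶠ x in atTop, c * (b + x / r) ^ θ < (x - a) ^ κ := by
  have hκ : 0 < κ := hθ.trans_lt hθκ
  have hK : 0 < |b| + 1 / r := by positivity
  have hpow := (tendsto_rpow_atTop (sub_pos.2 hθκ)).eventually_gt_atTop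
    (|c| * (|b| + 1 / r) ^ θ * 2 ^ κ)
  filter_upwards [hpow, eventually_ge_atTop 1, eventually_ge_atTop (2 * |a|),
    eventually_ge_atTop (r * |b|)] with x hpow hx_one hxa hxb
  have hx : 0 < x := one_pos.trans_le hx_one
  have harg_nonneg : 0 ≤ b + x / r := by
    have := (le_div_iff₀' hr).2 hxb
    linarith [neg_abs_le b]
  have harg_le : b + x / r ≤ (|b| + 1 / r) * x := by
    rw [add_mul, one_div_mul_eq_div]
    nlinarith [le_abs_self b, abs_nonneg b]
  have hhalf_le : x / 2 ≤ x - a := by linarith [le_abs_self a]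
  calc c * (b + x / r) ^ θ ≤ |c| * ((|b| + 1 / r) * x) ^ θ := by
        gcongr
        exact le_abs_self c
    _ = |c| * (|b| + 1 / r) ^ θ * x ^ θ := by rw [Real.mul_rpow hK.le hx.le, mul_assoc]
    _ < x ^ (κ - θ) / 2 ^ κ * x ^ θ := by
        gcongr
        rwa [lt_div_iff₀ (by positivity)]
    _ = (x / 2) ^ κ := by
        rw [Real.div_rpow hx.le zero_le_two, div_mul_eq_mul_div, ← Real.rpow_add hx,
          sub_add_cancel]
    _ ≤ (x - a) ^ κ := Real.rpow_le_rpow (by positivity) hhalf_le hκ.le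

lemma one_div_toReal_lt_one_div_toReal {v q : ℝ≥0∞} (hv : 0 < v) (hvq : v < q) :
    1 / q.toReal < 1 / v.toReal := by
  have hV : 0 < v.toReal := ENNReal.toReal_pos hv.ne' hvq.ne_top
  rcases eq_or_ne q ∞ with rfl | hq
  · rw [ENNReal.toReal_top, _root_.div_zero]
    exact one_div_pos.2 hV
  · exact one_div_lt_one_div_of_lt hV (ENNReal.toReal_strict_mono hq hvq)

section SharpIndex

variable {α : Type} [MeasurableSpace α] {μ : Measure α} {P ε : ℝ} {v q c : ℝ≥0∞}

lemma exists_mul_lorentzNorm_truncatedPower_lt_hardy {U : α → ℝ} {M : ℝ} (hM : 0 < M)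
    (hU : MeasurePreserving U μ (volume.restrict (Ioo 0 M))) (hP : 0 < P) (hv : 0 < v)
    (hvq : v < q) (hε : 0 < ε) (hc : c ≠ ∞) :
    ∃ δ, lorentzNorm μ (fun x => truncatedPower P δ (U x)) P q ≠ ∞ ∧
      c * lorentzNorm μ (fun x => truncatedPower P δ (U x)) P q <
        hardy μ (1 / P) v ε fun x => truncatedPower P δ (U x) := by
  have hm : 0 < min ε M := lt_min hε hM
  obtain ⟨x, hgrowth, hx⟩ := ((eventually_mul_rpow_lt_rpow (by positivity)
    (one_div_toReal_lt_one_div_toReal hv hvq) hP c.toReal (Real.log (M / min ε M))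
    (1 / q.toReal)).and (eventually_ge_atTop (Real.log (M / min ε M)))).exists
  have ha : 0 ≤ Real.log (M / min ε M) := Real.log_nonneg ((one_le_div hm).2 (min_le_right _ _))
  have hx_nonneg : 0 ≤ x := ha.trans hx
  have hδ : 0 < M * Real.exp (-x) := by positivity
  have hδm : M * Real.exp (-x) ≤ min ε M := by
    rw [Real.log_le_iff_le_exp (div_pos hM hm), div_le_iff₀ hm] at hx
    rwa [Real.exp_neg, ← div_eq_mul_inv, div_le_iff₀' (Real.exp_pos x)]
  have hlogM : Real.log (M / (M * Real.exp (-x))) = x := by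
    rw [Real.exp_neg, div_mul_eq_div_div, div_self hM.ne', one_div, inv_inv, Real.log_exp]
  have hlogm : Real.log (min ε M / (M * Real.exp (-x))) = x - Real.log (M / min ε M) := by
    rw [Real.log_div hm.ne' hδ.ne', Real.log_mul hM.ne' (Real.exp_pos _).ne', Real.log_exp,
      Real.log_div hM.ne' hm.ne']
    ring
  have hupper := lorentzNorm_truncatedPower_le hU hP hδ (hδm.trans (min_le_right _ _))
    (hv.trans hvq)
  have hlower := ofReal_log_rpow_le_hardy_truncatedPower hU hP hδ hvq.ne_top hδm
  rw [hlogM, ENNReal.ofReal_rpow_of_nonneg (by positivity) (by positivity)] at hupper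
  rw [hlogm, ENNReal.ofReal_rpow_of_nonneg (sub_nonneg.2 hx) (by positivity)] at hlower
  refine ⟨M * Real.exp (-x), hupper.trans_lt ENNReal.ofReal_lt_top |>.ne, ?_⟩
  refine (mul_le_mul_right hupper c).trans_lt (lt_of_lt_of_le ?_ hlower)
  rw [← ENNReal.ofReal_toReal hc, ← ENNReal.ofReal_mul ENNReal.toReal_nonneg]
  exact (ENNReal.ofReal_lt_ofReal_iff_of_nonneg (by positivity)).2 hgrowth

lemma exists_mul_lorentzNorm_comp_lt_hardy [IsFiniteMeasure μ] [NeZero μ] {φ : α → ℝ}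
    (hφ : Measurable φ) [NullSingletonClass (μ.map φ)] (hP : 0 < P) (hv : 0 < v) (hvq : v < q)
    (hε : 0 < ε) (hc : c ≠ ∞) :
    ∃ g : ℝ → ℝ, Measurable g ∧ lorentzNorm μ (fun x => g (φ x)) P q ≠ ∞ ∧
      c * lorentzNorm μ (fun x => g (φ x)) P q < hardy μ (1 / P) v ε fun x => g (φ x) := by
  have hcdf := measurePreserving_measureReal_Iic (ν := μ.map φ)
  have hM : 0 < (μ.map φ).real univ := by
    rw [map_measureReal_apply hφ MeasurableSet.univ, preimage_univ]
    exact measureReal_univ_pos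
  obtain ⟨δ, hδ⟩ := exists_mul_lorentzNorm_truncatedPower_lt_hardy hM
    (hcdf.comp (hφ.measurePreserving μ)) hP hv hvq hε hc
  exact ⟨_, measurable_truncatedPower.comp hcdf.measurable, hδ⟩

end SharpIndex

lemma nullSingletonClass_map_eval {d : ℕ} {α : Fin d → Type} [∀ i, MeasurableSpace (α i)]
    {μ : ∀ i, Measure (α i)} [∀ i, SigmaFinite (μ i)] {j : Fin d} {φ : α j → ℝ}
    (hφ : Measurable φ) [NullSingletonClass ((μ j).map φ)] :
    NullSingletonClass ((Measure.pi μ).map fun x => φ (x j)) where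
  measure_singleton y := by
    have hy : μ j (φ ⁻¹' {y}) = 0 := by
      rw [← Measure.map_apply hφ (measurableSet_singleton y), measure_singleton]
    rw [Measure.map_apply (by fun_prop) (measurableSet_singleton y)]
    exact Measure.pi_eval_preimage_null μ hy

section MixedIndex

variable {d : ℕ} {α : Fin d → Type} [∀ i, MeasurableSpace (α i)] {μ : ∀ i, Measure (α i)}
  [∀ i, IsFiniteMeasure (μ i)] {p : Fin d → ℝ≥0∞}

lemma hardy_le_mixedLorentzNorm {m q : ℝ≥0∞} (hm : 0 < m) (hm_top : m ≠ ∞) (hmp : ∀ i, m ≤ p i)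
    (hq : 0 < q) (ε : ℝ) {f : (∀ i, α i) → ℝ} (hf : Measurable f) :
    hardy (Measure.pi μ) (1 / m.toReal) q ε f ≤
      (ENNReal.ofReal m.toReal ^ (1 / q.toReal) *
        ∏ i, μ i univ ^ (1 / m.toReal - 1 / (p i).toReal)) * mixedLorentzNorm μ p q f := by
  rw [mul_assoc]
  refine (hardy_le_lorentzNorm (ENNReal.toReal_pos hm.ne' hm_top) hq ε).trans ?_
  gcongr
  exact lorentzNorm_le_mixedLorentzNorm hm hm_top hmp hq hf

lemma exists_mul_mixedLorentzNorm_lt_hardy [∀ i, NeZero (μ i)] (hp : ∀ i, 0 < p i) {j : Fin d}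
    (hj : p j ≠ ∞) {φ : α j → ℝ} (hφ : Measurable φ) [NullSingletonClass ((μ j).map φ)]
    {v q c : ℝ≥0∞} (hv : 0 < v) (hvq : v < q) {ε : ℝ} (hε : 0 < ε) (hc : c ≠ ∞) :
    ∃ f : (∀ i, α i) → ℝ, Measurable f ∧ mixedLorentzNorm μ p q f < ∞ ∧
      c * mixedLorentzNorm μ p q f < hardy (Measure.pi μ) (1 / (p j).toReal) v ε f := by
  have : NullSingletonClass ((Measure.pi μ).map fun x => φ (x j)) := nullSingletonClass_map_eval hφ
  have : NeZero (Measure.pi μ) := ⟨Measure.measure_univ_ne_zero.1 <| by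
    rw [Measure.pi_univ]
    exact Finset.prod_ne_zero_iff.2 fun i _ => NeZero.ne _⟩
  obtain ⟨C, hC, hmixed⟩ := exists_mixedLorentzNorm_comp_eval_le (μ := μ) hp hj (hv.trans hvq)
  obtain ⟨g, hg, hfinite, hlt⟩ := exists_mul_lorentzNorm_comp_lt_hardy (μ := Measure.pi μ)
    (φ := fun x => φ (x j)) (by fun_prop) (ENNReal.toReal_pos (hp j).ne' hj) hv hvq hε
    (ENNReal.mul_ne_top hc hC)
  have hle := hmixed (fun y => g (φ y)) (by fun_prop)
  refine ⟨fun x => g (φ (x j)), by fun_prop,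
    hle.trans_lt (ENNReal.mul_lt_top hC.lt_top hfinite.lt_top), lt_of_le_of_lt ?_ hlt⟩
  rw [mul_assoc]
  gcongr

end MixedIndex

theorem statement8_general {d : ℕ} {α : Fin d → Type} [∀ i, MeasurableSpace (α i)]
    (μ : ∀ i, Measure (α i)) [∀ i, IsFiniteMeasure (μ i)] [∀ i, NeZero (μ i)]
    (p : Fin d → ℝ≥0∞) (hminpos : 0 < ⨅ i, p i) (hminfin : ⨅ i, p i < ∞)
    {j : Fin d} (hj : p j = ⨅ i, p i) {φ : α j → ℝ} (hφ : Measurable φ)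
    [NullSingletonClass ((μ j).map φ)] (q : ℝ≥0∞) (hq : 0 < q) :
    (∃ ε > (0 : ℝ), ∃ c : ℝ≥0∞, 0 < c ∧ c < ∞ ∧
      ∀ f : (∀ i, α i) → ℝ, Measurable f → mixedLorentzNorm μ p q f < ∞ →
        hardy (Measure.pi μ) (1 / (⨅ i, p i).toReal) q ε f ≤ c * mixedLorentzNorm μ p q f) ∧
    (∀ v : ℝ≥0∞, 0 < v → v < q →
      ¬ ∃ ε > (0 : ℝ), ∃ c : ℝ≥0∞, c < ∞ ∧
        ∀ f : (∀ i, α i) → ℝ, Measurable f → mixedLorentzNorm μ p q f < ∞ →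
          hardy (Measure.pi μ) (1 / (⨅ i, p i).toReal) v ε f ≤ c * mixedLorentzNorm μ p q f) := by
  have hm_le : ∀ i, ⨅ i, p i ≤ p i := iInf_le p
  constructor
  · set C := ENNReal.ofReal (⨅ i, p i).toReal ^ (1 / q.toReal) *
      ∏ i, μ i univ ^ (1 / (⨅ i, p i).toReal - 1 / (p i).toReal)
    have hC : C ≠ ∞ := ENNReal.mul_ne_top (by finiteness)
      (prod_measure_univ_rpow_ne_top hminpos hminfin.ne hm_le)
    refine ⟨1, one_pos, C + 1, by positivity, by finiteness, fun f hf _ => ?_⟩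
    refine (hardy_le_mixedLorentzNorm hminpos hminfin.ne hm_le hq 1 hf).trans ?_
    gcongr
    exact le_self_add
  · rintro v hv hvq ⟨ε, hε, c, hc, hardy_le⟩
    rw [← hj] at hminfin hardy_le
    obtain ⟨f, hf, hfinite, hlt⟩ := exists_mul_mixedLorentzNorm_lt_hardy (μ := μ)
      (fun i => hminpos.trans_le (hm_le i)) hminfin.ne hφ hv hvq hε hc.ne
    exact hlt.not_ge (hardy_le f hf hfinite)

end

/-- The additional growth-envelope index of `L_{p⃗,q}(Ω)` equals `q`:
the Hardy-type inequality (with respect to the envelope `t^{-1/min{p₁,…,p_d}}`) holds for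
`v = q` and fails for every `0 < v < q`. -/
theorem statement8 (d : ℕ) (hd : 0 < d) (Ω : Fin d → Set ℝ)
    (hΩmeas : ∀ i, MeasurableSet (Ω i)) (hΩfin : ∀ i, volume (Ω i) < ∞)
    (hΩsub : ∀ i, Set.Ioc (0 : ℝ) 1 ⊆ Ω i)
    (p : Fin d → ℝ≥0∞) (hp : ∀ i, 0 < p i)
    (hminpos : 0 < ⨅ i, p i) (hminfin : ⨅ i, p i < ∞)
    (q : ℝ≥0∞) (hq : 0 < q) :
    (∃ ε > (0 : ℝ), ∃ c : ℝ≥0∞, 0 < c ∧ c < ∞ ∧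
      ∀ f : (Fin d → ℝ) → ℝ, Measurable f →
        mixedLorentzNorm (fun i => volume.restrict (Ω i)) p q f < ∞ →
        hardy (Measure.pi fun i => volume.restrict (Ω i)) (1 / (⨅ i, p i).toReal) q ε f ≤
          c * mixedLorentzNorm (fun i => volume.restrict (Ω i)) p q f) ∧
    (∀ v : ℝ≥0∞, 0 < v → v < q →
      ¬ ∃ ε > (0 : ℝ), ∃ c : ℝ≥0∞, c < ∞ ∧
        ∀ f : (Fin d → ℝ) → ℝ, Measurable f →
          mixedLorentzNorm (fun i => volume.restrict (Ω i)) p q f < ∞ →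
          hardy (Measure.pi fun i => volume.restrict (Ω i)) (1 / (⨅ i, p i).toReal) v ε f ≤
            c * mixedLorentzNorm (fun i => volume.restrict (Ω i)) p q f) := by
  have : Nonempty (Fin d) := ⟨⟨0, hd⟩⟩
  obtain ⟨j, hj⟩ := exists_eq_ciInf_of_finite (f := p)
  have hfinite (i) : IsFiniteMeasure (volume.restrict (Ω i)) := ⟨by simpa using hΩfin i⟩
  have hne_zero (i) : NeZero (volume.restrict (Ω i)) :=
    ⟨mt Measure.restrict_eq_zero.1 <| ne_of_gt <|
      (by simp : 0 < volume (Ioc (0 : ℝ) 1)).trans_le (measure_mono (hΩsub i))⟩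
  have : NullSingletonClass ((volume.restrict (Ω j)).map id) := by
    rw [Measure.map_id]
    infer_instance
  exact statement8_general _ p hminpos hminfin hj measurable_id q hq
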